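/- Let P be a tripartite graph on finite vertex classes (A,B,C) given by bipartite graphs E_AB between A and B, E_AC between A and C, and E_BC between B and C. If both E_AC and E_BC are ε-regular, then the number t(P) of triangles of P, i.e., triples (a,b,c) ∈ A × B × C with (a,b) ∈ E_AB, (a,c) ∈ E_AC and (b,c) ∈ E_BC, satisfies t(P) = (d(E_AB)·d(E_AC)·d(E_BC) ± 7ε)·|A||B||C|. -/

import Mathlib

open scoped Classical

noncomputable section

/-- The number of edges of a bipartite graph `G` between vertex subsets `A` and `B`. -/
def bmEdges {α β : Type*} (G : Finset (α × β)) (A : Finset α) (B : Finset β) : ℕ :=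
  (G.filter fun p => p.1 ∈ A ∧ p.2 ∈ B).card

/-- The edge density of a bipartite graph `G` between `A` and `B`. -/
def bmDens {α β : Type*} (G : Finset (α × β)) (A : Finset α) (B : Finset β) : ℝ :=
  (bmEdges G A B : ℝ) / ((A.card : ℝ) * (B.card : ℝ))

/-- `⟨δ⟩`-regularity of a bipartite graph `G` on vertex classes `(A, B)`:
for all `A' ⊆ A`, `B' ⊆ B` with `|A'| ≥ δ|A|`, `|B'| ≥ δ|B|` we have
`d_G(A',B') ≥ (1/2) d_G(A,B)`. -/
def DeltaReg {α β : Type*} (δ : ℝ) (G : Finset (α × β)) (A : Finset α) (B : Finset β) : Prop :=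
  ∀ A' ⊆ A, ∀ B' ⊆ B, δ * (A.card : ℝ) ≤ (A'.card : ℝ) → δ * (B.card : ℝ) ≤ (B'.card : ℝ) →
    bmDens G A' B' ≥ (1 / 2) * bmDens G A B

/-- Szemerédi `ε`-regularity of a bipartite graph on `(A, B)`. -/
def SzReg {α β : Type*} (ε : ℝ) (G : Finset (α × β)) (A : Finset α) (B : Finset β) : Prop :=
  ∀ A' ⊆ A, ∀ B' ⊆ B, ε * (A.card : ℝ) ≤ (A'.card : ℝ) → ε * (B.card : ℝ) ≤ (B'.card : ℝ) →
    |bmDens G A' B' - bmDens G A B| ≤ ε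

/-- `P` is a partition of the finite set `S` (into nonempty parts). -/
def IsPartition {α : Type*} (P : Finset (Finset α)) (S : Finset α) : Prop :=
  (∀ p ∈ P, p.Nonempty) ∧ (∀ p ∈ P, p ⊆ S) ∧ ∀ v ∈ S, ∃! p, p ∈ P ∧ v ∈ p

/-- `Q` refines `P`: every member of `Q` is contained in a member of `P`. -/
def Refines {α : Type*} (Q P : Finset (Finset α)) : Prop :=
  ∀ q ∈ Q, ∃ p ∈ P, q ⊆ p

/-- All parts of `P` have the same size. -/
def EquitableParts {α : Type*} (P : Finset (Finset α)) : Prop :=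
  ∀ p ∈ P, ∀ q ∈ P, p.card = q.card

/-- `S ⊆_β T`, i.e. `|S \ T| < β |S|`. -/
def ApproxSub {α : Type*} [DecidableEq α] (β' : ℝ) (S T : Finset α) : Prop :=
  ((S \ T).card : ℝ) < β' * (S.card : ℝ)

/-- `S ∈_β P`, i.e. `S ⊆_β p` for some `p ∈ P`. -/
def ApproxMem {α : Type*} [DecidableEq α] (β' : ℝ) (S : Finset α) (P : Finset (Finset α)) :
    Prop :=
  ∃ p ∈ P, ApproxSub β' S p

/-- `Q ≺_β P` for partitions `Q`, `P` of the set `S`. -/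
def ApproxRefines {α : Type*} [DecidableEq α] (β' : ℝ) (Q P : Finset (Finset α))
    (S : Finset α) : Prop :=
  ∑ q ∈ Q.filter fun q => ¬ ApproxMem β' q P, (q.card : ℝ) ≤ β' * (S.card : ℝ)

/-- The vertex partition `P ∪ Q` of a bipartite graph `G` on vertex classes `(L, R)` is
`⟨δ⟩`-regular: one can add/remove at most `δ·e(G)` edges so that the bipartite graph induced
on each pair of distinct parts is `⟨δ⟩`-regular. -/
def DeltaRegPartition {α β : Type*} [DecidableEq α] [DecidableEq β]
    (δ : ℝ) (G : Finset (α × β)) (L : Finset α) (R : Finset β)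
    (P : Finset (Finset α)) (Q : Finset (Finset β)) : Prop :=
  ∃ G' : Finset (α × β), G' ⊆ L ×ˢ R ∧
    ((G' \ G).card : ℝ) + ((G \ G').card : ℝ) ≤ δ * (G.card : ℝ) ∧
    ∀ A ∈ P, ∀ B ∈ Q, DeltaReg δ G' A B

/-- The vertex partition `P ∪ Q` of a bipartite graph `G` is perfectly `⟨δ⟩`-regular:
without modifying any edges, each pair of distinct parts induces a `⟨δ⟩`-regular graph. -/
def PerfectDeltaRegPartition {α β : Type*} (δ : ℝ) (G : Finset (α × β))
    (P : Finset (Finset α)) (Q : Finset (Finset β)) : Prop :=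
  ∀ A ∈ P, ∀ B ∈ Q, DeltaReg δ G A B

/-- A 2-partition `(Z, E)` on the vertex set `S`: `Z` partitions `S`, the members of `E` are
pairwise edge-disjoint bipartite graphs between distinct parts of `Z`, and for all distinct
`Z1, Z2 ∈ Z` the complete bipartite graph `Z1 × Z2` is the union of the members of `E`
between `Z1` and `Z2`. -/
def Is2Partition {α : Type*} [DecidableEq α]
    (Z : Finset (Finset α)) (E : Finset (Finset (α × α))) (S : Finset α) : Prop :=
  IsPartition Z S ∧
  (∀ g ∈ E, ∃ Z1 ∈ Z, ∃ Z2 ∈ Z, Z1 ≠ Z2 ∧ g ⊆ Z1 ×ˢ Z2) ∧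
  (∀ g ∈ E, ∀ g' ∈ E, g ≠ g' → Disjoint g g') ∧
  ∀ Z1 ∈ Z, ∀ Z2 ∈ Z, Z1 ≠ Z2 → ∀ p ∈ Z1 ×ˢ Z2, ∃ g ∈ E, g ⊆ Z1 ×ˢ Z2 ∧ p ∈ g

/-- The parts of `Z` contained in `A` (e.g. `Z_i`, the restriction of `Z` to `V_i`). -/
def partsIn {α : Type*} [DecidableEq α] (Z : Finset (Finset α)) (A : Finset α) :
    Finset (Finset α) :=
  Z.filter fun z => z ⊆ A

/-- The members of `E` contained in `A × B` (e.g. `E_i`). -/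
def graphsIn {α : Type*} [DecidableEq α] (E : Finset (Finset (α × α))) (A B : Finset α) :
    Finset (Finset (α × α)) :=
  E.filter fun g => g ⊆ A ×ˢ B

/-- `H` is a 3-partite 3-graph on the (disjoint) vertex classes `(V1, V2, V3)`. -/
def Is3Partite {α : Type*} (H : Finset (α × α × α)) (V1 V2 V3 : Finset α) : Prop :=
  (Disjoint V1 V2 ∧ Disjoint V1 V3 ∧ Disjoint V2 V3) ∧ H ⊆ V1 ×ˢ V2 ×ˢ V3

/-- The auxiliary bipartite graph `G_H^1` on `(V2 × V3, V1)`. -/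
def GH1 {α : Type*} [DecidableEq α] (H : Finset (α × α × α)) : Finset ((α × α) × α) :=
  H.image fun t => ((t.2.1, t.2.2), t.1)

/-- The auxiliary bipartite graph `G_H^2` on `(V1 × V3, V2)`. -/
def GH2 {α : Type*} [DecidableEq α] (H : Finset (α × α × α)) : Finset ((α × α) × α) :=
  H.image fun t => ((t.1, t.2.2), t.2.1)

/-- The auxiliary bipartite graph `G_H^3` on `(V1 × V2, V3)`. -/
def GH3 {α : Type*} [DecidableEq α] (H : Finset (α × α × α)) : Finset ((α × α) × α) :=
  H.image fun t => ((t.1, t.2.1), t.2.2)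

/-- The 2-partition `(Z, E)` is `⟨δ⟩`-good: every bipartite graph in `E` (between any two
distinct vertex clusters of `Z`) is `⟨δ⟩`-regular. -/
def DeltaGood {α : Type*} [DecidableEq α] (δ : ℝ)
    (Z : Finset (Finset α)) (E : Finset (Finset (α × α))) : Prop :=
  ∀ g ∈ E, ∀ Z1 ∈ Z, ∀ Z2 ∈ Z, Z1 ≠ Z2 → g ⊆ Z1 ×ˢ Z2 → DeltaReg δ g Z1 Z2

/-- `(Z, E)` is a `⟨δ⟩`-regular partition of the 3-partite 3-graph `H` on `(V1, V2, V3)`: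
it is a `⟨δ⟩`-good 2-partition with `Z ≺ {V1, V2, V3}` and, for each `1 ≤ i ≤ 3`,
`E_i ∪ Z_i` is a `⟨δ⟩`-regular vertex partition of `G_H^i`. -/
def Delta3RegPartition {α : Type*} [DecidableEq α] (δ : ℝ) (H : Finset (α × α × α))
    (V1 V2 V3 : Finset α) (Z : Finset (Finset α)) (E : Finset (Finset (α × α))) : Prop :=
  Is2Partition Z E (V1 ∪ V2 ∪ V3) ∧ Refines Z {V1, V2, V3} ∧ DeltaGood δ Z E ∧
  DeltaRegPartition δ (GH1 H) (V2 ×ˢ V3) V1 (graphsIn E V2 V3) (partsIn Z V1) ∧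
  DeltaRegPartition δ (GH2 H) (V1 ×ˢ V3) V2 (graphsIn E V1 V3) (partsIn Z V2) ∧
  DeltaRegPartition δ (GH3 H) (V1 ×ˢ V2) V3 (graphsIn E V1 V2) (partsIn Z V3)

/-- The tower function: `twr 0 = 1` and `twr (x+1) = 2 ^ twr x`. -/
def twr : ℕ → ℕ
  | 0 => 1
  | n + 1 => 2 ^ twr n

/-- The wowzer function: `twr` iterated `x` times, applied to `1`. -/
def wow (x : ℕ) : ℕ := twr^[x] 1

/-- The set of triangles of the triad given by bipartite graphs `e1`, `e2`, `e3`: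
triples `(a, b, c)` with `(a,b) ∈ e1`, `(a,c) ∈ e2` and `(b,c) ∈ e3`. -/
def tri {α β γ : Type*} [DecidableEq α] [DecidableEq β] [DecidableEq γ]
    (e1 : Finset (α × β)) (e2 : Finset (α × γ)) (e3 : Finset (β × γ)) :
    Finset (α × β × γ) :=
  ((e1 ×ˢ e3).filter fun q => q.1.2 = q.2.1 ∧ (q.1.1, q.2.2) ∈ e2).image
    fun q => (q.1.1, q.1.2, q.2.2)

/-- The density `d_H(P)` of a triad `P = (e1, e2, e3)` in the 3-graph `H`. -/
def triDens {α : Type*} [DecidableEq α] (H : Finset (α × α × α))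
    (e1 e2 e3 : Finset (α × α)) : ℝ :=
  ((H ∩ tri e1 e2 e3).card : ℝ) / ((tri e1 e2 e3).card : ℝ)

/-- The triad `(e1, e2, e3)` is `ε`-regular in the 3-graph `H`: every subtriad `(f1, f2, f3)`
with `t(P') ≥ ε t(P)` satisfies `|d_H(P') - d_H(P)| ≤ ε`. -/
def TriadReg {α : Type*} [DecidableEq α] (ε : ℝ) (H : Finset (α × α × α))
    (e1 e2 e3 : Finset (α × α)) : Prop :=
  ∀ f1 ⊆ e1, ∀ f2 ⊆ e2, ∀ f3 ⊆ e3,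
    ε * ((tri e1 e2 e3).card : ℝ) ≤ ((tri f1 f2 f3).card : ℝ) →
    |triDens H f1 f2 f3 - triDens H e1 e2 e3| ≤ ε

/-- The triads of the 2-partition `(Z, E)`: triples of members of `E` forming a tripartite
graph on three distinct parts of `Z`. -/
def triads {α : Type*} [DecidableEq α] (Z : Finset (Finset α))
    (E : Finset (Finset (α × α))) :
    Finset (Finset (α × α) × Finset (α × α) × Finset (α × α)) :=
  (E ×ˢ E ×ˢ E).filter fun e => ∃ Z1 ∈ Z, ∃ Z2 ∈ Z, ∃ Z3 ∈ Z,
    Z1 ≠ Z2 ∧ Z1 ≠ Z3 ∧ Z2 ≠ Z3 ∧ e.1 ⊆ Z1 ×ˢ Z2 ∧ e.2.1 ⊆ Z1 ×ˢ Z3 ∧ e.2.2 ⊆ Z2 ×ˢ Z3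

/-- An `(ℓ, t, ε₂)`-equipartition on `S`: a 2-partition `(Z, E)` where `Z` is an equitable
partition of order `t` and every graph in `E` is `ε₂`-regular of density `ℓ⁻¹ ± ε₂`. -/
def IsEquipartition23 {α : Type*} [DecidableEq α] (ℓ t : ℕ) (ε₂ : ℝ)
    (Z : Finset (Finset α)) (E : Finset (Finset (α × α))) (S : Finset α) : Prop :=
  Is2Partition Z E S ∧ EquitableParts Z ∧ Z.card = t ∧
  ∀ g ∈ E, ∀ Z1 ∈ Z, ∀ Z2 ∈ Z, Z1 ≠ Z2 → g ⊆ Z1 ×ˢ Z2 →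
    SzReg ε₂ g Z1 Z2 ∧ |bmDens g Z1 Z2 - 1 / (ℓ : ℝ)| ≤ ε₂

/-- The `(ℓ,t,ε₂)`-equipartition `(Z, E)` is an `ε`-regular partition of the 3-graph `H`
with vertex set `S` (Frankl–Rödl): `Σ t(P) ≤ ε |S|³`, summed over non-`ε`-regular triads. -/
def FRRegPartition {α : Type*} [DecidableEq α] (ε : ℝ) (H : Finset (α × α × α))
    (S : Finset α) (Z : Finset (Finset α)) (E : Finset (Finset (α × α))) : Prop :=
  ∑ e ∈ (triads Z E).filter fun e => ¬ TriadReg ε H e.1 e.2.1 e.2.2,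
    ((tri e.1 e.2.1 e.2.2).card : ℝ) ≤ ε * (S.card : ℝ) ^ 3

/-- The function `f` from the definition of quasirandomness of a triad. -/
def fQ {α : Type*} [DecidableEq α] (H : Finset (α × α × α)) (e1 e2 e3 : Finset (α × α))
    (x y z : α) : ℝ :=
  if (x, y, z) ∈ tri e1 e2 e3 then
    (if (x, y, z) ∈ H then 1 - triDens H e1 e2 e3 else -triDens H e1 e2 e3)
  else 0

/-- The octahedron sum from the definition of quasirandomness. -/
def octSum {α : Type*} [DecidableEq α] (H : Finset (α × α × α)) (e1 e2 e3 : Finset (α × α))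
    (X Y Z : Finset α) : ℝ :=
  ∑ x0 ∈ X, ∑ x1 ∈ X, ∑ y0 ∈ Y, ∑ y1 ∈ Y, ∑ z0 ∈ Z, ∑ z1 ∈ Z,
    fQ H e1 e2 e3 x0 y0 z0 * fQ H e1 e2 e3 x0 y0 z1 * fQ H e1 e2 e3 x0 y1 z0 *
      fQ H e1 e2 e3 x0 y1 z1 * fQ H e1 e2 e3 x1 y0 z0 * fQ H e1 e2 e3 x1 y0 z1 *
      fQ H e1 e2 e3 x1 y1 z0 * fQ H e1 e2 e3 x1 y1 z1

/-- The triad `(e1, e2, e3)` on vertex classes `(X, Y, Z)` with `d(e1) = d(e2) = d(e3) = d`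
and `|X| = |Y| = |Z| = n` is `a`-quasirandom in `H`: the octahedron sum is at most
`a d¹² n⁶`. -/
def Quasirandom {α : Type*} [DecidableEq α] (a : ℝ) (H : Finset (α × α × α))
    (e1 e2 e3 : Finset (α × α)) (X Y Z : Finset α) : Prop :=
  ∀ (d : ℝ) (n : ℕ), bmDens e1 X Y = d → bmDens e2 X Z = d → bmDens e3 Y Z = d →
    X.card = n → Y.card = n → Z.card = n →
    octSum H e1 e2 e3 X Y Z ≤ a * d ^ 12 * (n : ℝ) ^ 6

/-- The `(ℓ,t,ε₂)`-equipartition `(Z, E)` is an `a`-quasirandom partition of the 3-graph `H`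
with vertex set `S`: `Σ t(P) ≤ a |S|³`, summed over non-`a`-quasirandom triads. -/
def QuasirandomPartition {α : Type*} [DecidableEq α] (a : ℝ) (H : Finset (α × α × α))
    (S : Finset α) (Z : Finset (Finset α)) (E : Finset (Finset (α × α))) : Prop :=
  ∑ e ∈ (E ×ˢ E ×ˢ E).filter fun e => ∃ Z1 ∈ Z, ∃ Z2 ∈ Z, ∃ Z3 ∈ Z,
      Z1 ≠ Z2 ∧ Z1 ≠ Z3 ∧ Z2 ≠ Z3 ∧
      e.1 ⊆ Z1 ×ˢ Z2 ∧ e.2.1 ⊆ Z1 ×ˢ Z3 ∧ e.2.2 ⊆ Z2 ×ˢ Z3 ∧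
      ¬ Quasirandom a H e.1 e.2.1 e.2.2 Z1 Z2 Z3,
    ((tri e.1 e.2.1 e.2.2).card : ℝ) ≤ a * (S.card : ℝ) ^ 3

/-- `e(i) = 2^(i+10)`. -/
def efn (i : ℕ) : ℕ := 2 ^ (i + 10)

/-- `t(1) = 2^250` and `t(i+1) = 2^(t(i)/e(i))` for `i ≥ 1`. -/
def tfn : ℕ → ℕ
  | 0 => 0
  | 1 => 2 ^ 250
  | n + 2 => 2 ^ (tfn (n + 1) / efn (n + 1))

/-- `w(1) = 1` and `w(i+1) = w*(i) = t(w(i))/e(i)` for `i ≥ 1`. -/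
def wfn : ℕ → ℕ
  | 0 => 0
  | 1 => 1
  | n + 2 => tfn (wfn (n + 1)) / efn (n + 1)

/-- `w*(s) = t(w(s))/e(s)`. -/
def wstar (s : ℕ) : ℕ := tfn (wfn s) / efn s

end

/-- Real-valued indicator of a bipartite graph. -/
noncomputable def indG {α β : Type*} (G : Finset (α × β)) (a : α) (b : β) : ℝ :=
  if (a, b) ∈ G then 1 else 0

theorem indG_nonneg {α β : Type*} (G : Finset (α × β)) (a : α) (b : β) : 0 ≤ indG G a b := by
  unfold indG; split_ifs <;> norm_num

theorem indG_le_one {α β : Type*} (G : Finset (α × β)) (a : α) (b : β) : indG G a b ≤ 1 := by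
  unfold indG; split_ifs <;> norm_num

theorem bmEdges_eq {α β : Type*} (G : Finset (α × β)) (A : Finset α) (B : Finset β) :
    (bmEdges G A B : ℝ) = ∑ a ∈ A, ∑ b ∈ B, indG G a b := by
  have h : (G.filter fun p => p.1 ∈ A ∧ p.2 ∈ B) = (A ×ˢ B).filter fun p => p ∈ G := by
    ext p
    simp only [Finset.mem_filter, Finset.mem_product]
    tauto
  unfold bmEdges
  rw [h, Finset.card_filter, Finset.sum_product]
  push_cast
  rfl

theorem bmEdges_nonneg_le {α β : Type*} (G : Finset (α × β)) (A : Finset α) (B : Finset β) :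
    (bmEdges G A B : ℝ) ≤ (A.card : ℝ) * (B.card : ℝ) := by
  rw [bmEdges_eq]
  calc ∑ a ∈ A, ∑ b ∈ B, indG G a b ≤ ∑ a ∈ A, ∑ b ∈ B, (1 : ℝ) :=
        Finset.sum_le_sum fun a _ => Finset.sum_le_sum fun b _ => indG_le_one G a b
    _ = _ := by simp

theorem bmDens_nonneg {α β : Type*} (G : Finset (α × β)) (A : Finset α) (B : Finset β) :
    0 ≤ bmDens G A B := by
  unfold bmDens; positivity

theorem bmDens_le_one {α β : Type*} (G : Finset (α × β)) (A : Finset α) (B : Finset β) :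
    bmDens G A B ≤ 1 :=
  div_le_one_of_le₀ (bmEdges_nonneg_le G A B) (by positivity)

theorem bmDens_mul {α β : Type*} (G : Finset (α × β)) (A : Finset α) (B : Finset β) :
    bmDens G A B * ((A.card : ℝ) * (B.card : ℝ)) = bmEdges G A B := by
  unfold bmDens
  apply div_mul_cancel_of_imp
  intro h
  have h1 := bmEdges_nonneg_le G A B
  rw [h] at h1
  exact le_antisymm h1 (by positivity)

theorem SzReg.eps_nonneg {α β : Type*} {ε : ℝ} {G : Finset (α × β)} {A : Finset α}
    {B : Finset β} (h : SzReg ε G A B) : 0 ≤ ε := by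
  by_contra hε
  push Not at hε
  have h1 := h A (Finset.Subset.refl _) B (Finset.Subset.refl _)
    (by nlinarith [Nat.cast_nonneg (α := ℝ) A.card])
    (by nlinarith [Nat.cast_nonneg (α := ℝ) B.card])
  linarith [abs_nonneg (bmDens G A B - bmDens G A B)]

/-- Cut-norm form of regularity. -/
theorem SzReg.cut {α β : Type*} {ε : ℝ} {G : Finset (α × β)} {A : Finset α}
    {B : Finset β} (h : SzReg ε G A B) (A' : Finset α) (hA : A' ⊆ A)
    (B' : Finset β) (hB : B' ⊆ B) :
    |∑ a ∈ A', ∑ b ∈ B', (indG G a b - bmDens G A B)| ≤ ε * ((A.card : ℝ) * (B.card : ℝ)) := by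
  have hε := h.eps_nonneg
  have e : ∑ a ∈ A', ∑ b ∈ B', (indG G a b - bmDens G A B)
      = (bmDens G A' B' - bmDens G A B) * ((A'.card : ℝ) * (B'.card : ℝ)) := by
    rw [sub_mul, bmDens_mul, bmEdges_eq]
    simp only [Finset.sum_sub_distrib, Finset.sum_const, nsmul_eq_mul]
    ring
  have ha : (A'.card : ℝ) ≤ A.card := by exact_mod_cast Finset.card_le_card hA
  have hb : (B'.card : ℝ) ≤ B.card := by exact_mod_cast Finset.card_le_card hB
  have ha0 : (0 : ℝ) ≤ A'.card := by positivity
  have hb0 : (0 : ℝ) ≤ B'.card := by positivity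
  rw [e, abs_mul, abs_of_nonneg (mul_nonneg ha0 hb0)]
  have h1 : |bmDens G A' B' - bmDens G A B| ≤ 1 := by
    rw [abs_le]
    constructor <;> linarith [bmDens_nonneg G A' B', bmDens_le_one G A' B', bmDens_nonneg G A B,
      bmDens_le_one G A B]
  have h2 : |bmDens G A' B' - bmDens G A B| * ((A'.card : ℝ) * (B'.card : ℝ))
      ≤ 1 * ((A'.card : ℝ) * (B'.card : ℝ)) :=
    mul_le_mul_of_nonneg_right h1 (mul_nonneg ha0 hb0)
  by_cases c1 : ε * (A.card : ℝ) ≤ A'.card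
  · by_cases c2 : ε * (B.card : ℝ) ≤ B'.card
    · exact mul_le_mul (h A' hA B' hB c1 c2)
        (mul_le_mul ha hb hb0 (by positivity)) (mul_nonneg ha0 hb0) hε
    · push Not at c2
      have := mul_le_mul ha c2.le hb0 (by positivity)
      nlinarith
  · push Not at c1
    have := mul_le_mul c1.le hb hb0 (by positivity)
    nlinarith

theorem tri_card_eq {α β γ : Type*} [DecidableEq α] [DecidableEq β] [DecidableEq γ]
    (A : Finset α) (B : Finset β) (C : Finset γ)
    (EAB : Finset (α × β)) (EAC : Finset (α × γ)) (EBC : Finset (β × γ))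
    (hAB : EAB ⊆ A ×ˢ B) (hAC : EAC ⊆ A ×ˢ C) :
    ((tri EAB EAC EBC).card : ℝ) =
      ∑ a ∈ A, ∑ b ∈ B, ∑ c ∈ C, indG EAB a b * (indG EAC a c * indG EBC b c) := by
  have h : tri EAB EAC EBC = (A ×ˢ B ×ˢ C).filter fun p =>
      (p.1, p.2.1) ∈ EAB ∧ (p.1, p.2.2) ∈ EAC ∧ (p.2.1, p.2.2) ∈ EBC := by
    ext ⟨a, b, c⟩
    simp only [tri, Finset.mem_image, Finset.mem_filter, Finset.mem_product, Prod.exists,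
      Prod.mk.injEq]
    constructor
    · rintro ⟨a', b', b'', c', ⟨⟨h1, h3⟩, rfl, h2⟩, rfl, rfl, rfl⟩
      have := Finset.mem_product.1 (hAB h1)
      have := Finset.mem_product.1 (hAC h2)
      tauto
    · rintro ⟨-, h1, h2, h3⟩
      exact ⟨a, b, b, c, ⟨⟨h1, h3⟩, rfl, h2⟩, rfl, rfl, rfl⟩
  rw [h, Finset.card_filter, Finset.sum_product]
  push_cast
  refine Finset.sum_congr rfl fun a _ => ?_
  rw [Finset.sum_product]
  refine Finset.sum_congr rfl fun b _ => Finset.sum_congr rfl fun c _ => ?_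
  simp only [indG]
  by_cases h1 : (a, b) ∈ EAB <;> by_cases h2 : (a, c) ∈ EAC <;> by_cases h3 : (b, c) ∈ EBC <;>
    simp [h1, h2, h3]

theorem sum_filter_indG {α β : Type*} (G : Finset (α × β)) (A : Finset α) (b : β) (F : α → ℝ)
    [DecidablePred fun a => (a, b) ∈ G] :
    ∑ a ∈ A.filter (fun a => (a, b) ∈ G), F a = ∑ a ∈ A, indG G a b * F a := by
  rw [Finset.sum_filter]
  refine Finset.sum_congr rfl fun a _ => ?_
  unfold indG; split_ifs <;> simp

theorem sum_filter_indG' {α β : Type*} (G : Finset (α × β)) (B : Finset β) (a : α) (F : β → ℝ)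
    [DecidablePred fun b => (a, b) ∈ G] :
    ∑ b ∈ B.filter (fun b => (a, b) ∈ G), F b = ∑ b ∈ B, indG G a b * F b := by
  rw [Finset.sum_filter]
  refine Finset.sum_congr rfl fun b _ => ?_
  unfold indG; split_ifs <;> simp

/-- **Lemma A.3 (triangle counting lemma).** -/
theorem triangle_counting {α β γ : Type*} [DecidableEq α] [DecidableEq β] [DecidableEq γ]
    (A : Finset α) (B : Finset β) (C : Finset γ)
    (EAB : Finset (α × β)) (EAC : Finset (α × γ)) (EBC : Finset (β × γ))
    (hAB : EAB ⊆ A ×ˢ B) (hAC : EAC ⊆ A ×ˢ C) (hBC : EBC ⊆ B ×ˢ C)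
    (ε : ℝ) (hACreg : SzReg ε EAC A C) (hBCreg : SzReg ε EBC B C) :
    |((tri EAB EAC EBC).card : ℝ) -
        bmDens EAB A B * bmDens EAC A C * bmDens EBC B C *
          ((A.card : ℝ) * (B.card : ℝ) * (C.card : ℝ))| ≤
      7 * ε * ((A.card : ℝ) * (B.card : ℝ) * (C.card : ℝ)) := by
  set dA := bmDens EAC A C with hdA
  set dB := bmDens EBC B C with hdB
  have hε := hACreg.eps_nonneg
  have key : ((tri EAB EAC EBC).card : ℝ) -
        bmDens EAB A B * dA * dB * ((A.card : ℝ) * (B.card : ℝ) * (C.card : ℝ)) =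
      (∑ b ∈ B, ∑ a ∈ A.filter (fun a => (a, b) ∈ EAB),
        ∑ c ∈ C.filter (fun c => (b, c) ∈ EBC), (indG EAC a c - dA)) +
      dA * ∑ a ∈ A, ∑ b ∈ B.filter (fun b => (a, b) ∈ EAB), ∑ c ∈ C, (indG EBC b c - dB) := by
    have e1 : bmDens EAB A B * dA * dB * ((A.card : ℝ) * (B.card : ℝ) * (C.card : ℝ)) =
        ∑ a ∈ A, ∑ b ∈ B, ∑ c ∈ C, indG EAB a b * (dA * dB) := by
      have e2 : bmDens EAB A B * dA * dB * ((A.card : ℝ) * (B.card : ℝ) * (C.card : ℝ)) =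
        (bmDens EAB A B * ((A.card : ℝ) * (B.card : ℝ))) * (C.card * (dA * dB)) := by ring
      rw [e2, bmDens_mul, bmEdges_eq]
      simp only [Finset.sum_const, nsmul_eq_mul, Finset.sum_mul]
      refine Finset.sum_congr rfl fun a _ => Finset.sum_congr rfl fun b _ => by ring
    rw [tri_card_eq A B C EAB EAC EBC hAB hAC, e1]
    simp only [sum_filter_indG, sum_filter_indG', Finset.mul_sum]
    rw [Finset.sum_comm (s := B) (t := A)]
    simp only [← Finset.sum_sub_distrib, ← Finset.sum_add_distrib]
    refine Finset.sum_congr rfl fun a _ => Finset.sum_congr rfl fun b _ =>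
      Finset.sum_congr rfl fun c _ => by ring
  have b1 : |∑ b ∈ B, ∑ a ∈ A.filter (fun a => (a, b) ∈ EAB),
        ∑ c ∈ C.filter (fun c => (b, c) ∈ EBC), (indG EAC a c - dA)| ≤
      B.card * (ε * ((A.card : ℝ) * (C.card : ℝ))) := by
    refine (Finset.abs_sum_le_sum_abs _ _).trans ?_
    refine (Finset.sum_le_card_nsmul _ _ (ε * ((A.card : ℝ) * (C.card : ℝ))) ?_).trans_eq
      (nsmul_eq_mul _ _)
    intro b _
    exact hACreg.cut _ (Finset.filter_subset _ _) _ (Finset.filter_subset _ _)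
  have b2 : |∑ a ∈ A, ∑ b ∈ B.filter (fun b => (a, b) ∈ EAB),
        ∑ c ∈ C, (indG EBC b c - dB)| ≤ A.card * (ε * ((B.card : ℝ) * (C.card : ℝ))) := by
    refine (Finset.abs_sum_le_sum_abs _ _).trans ?_
    refine (Finset.sum_le_card_nsmul _ _ (ε * ((B.card : ℝ) * (C.card : ℝ))) ?_).trans_eq
      (nsmul_eq_mul _ _)
    intro a _
    exact hBCreg.cut _ (Finset.filter_subset _ _) _ (Finset.Subset.refl _)
  rw [key]
  refine (abs_add_le _ _).trans ?_
  rw [abs_mul, abs_of_nonneg (bmDens_nonneg EAC A C)]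
  have b3 := mul_le_mul (bmDens_le_one EAC A C) b2 (abs_nonneg _) zero_le_one
  have b4 : 0 ≤ ε * ((A.card : ℝ) * (B.card : ℝ) * (C.card : ℝ)) := by positivity
  linarith
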